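/- Let P and Q be finite posets, let k = |P| ≥ 1, and suppose P ⪯ Q. Then a function g from the elements of Q to the elements of P chosen uniformly at random among all such functions is a witness for P ⪯ Q with probability at least k^(−2^k · k). Equivalently, the number of total functions g : Q → P that are witnesses for P ⪯ Q is at least k^(|Q|) · k^(−2^k · k). -/

import Mathlib

/-- A chain in a poset: a finite sequence `(v_1, …, v_n)` with `v_i < v_j` for `i < j`,
modeled as a strictly increasing list. -/
def IsPosetChain {α : Type*} [PartialOrder α] (l : List α) : Prop :=
  l.Chain' (· < ·)

/-- A partial function `f : Q ⇀ P` (modeled as `Q → Option P`) is a witness for `P ⪯ Q`: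
for every chain `(c_1, …, c_n)` in `P` there is a chain `(c'_1, …, c'_n)` in `Q`
with `f (c'_i) = c_i` for all `i`. -/
def IsChainMinorWitness {P Q : Type*} [PartialOrder P] [PartialOrder Q]
    (f : Q → Option P) : Prop :=
  ∀ c : List P, IsPosetChain c →
    ∃ c' : List Q, IsPosetChain c' ∧ c'.map f = c.map some

/-- `P` is a chain minor of `Q` if there is a witness. -/
def ChainMinor (P Q : Type*) [PartialOrder P] [PartialOrder Q] : Prop :=
  ∃ f : Q → Option P, IsChainMinorWitness f

/-- A total function `g : Q → P` is a witness for `P ⪯ Q`: for every chain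
`(c_1, …, c_n)` in `P` there is a chain `(c'_1, …, c'_n)` in `Q` with
`g (c'_i) = c_i` for all `i`. -/
def IsTotalChainMinorWitness {P Q : Type*} [PartialOrder P] [PartialOrder Q]
    (g : Q → P) : Prop :=
  ∀ c : List P, IsPosetChain c →
    ∃ c' : List Q, IsPosetChain c' ∧ c'.map g = c

/-!
A chain in `P` is determined by its set of elements, so there are at most `2 ^ k` of them, each of
length at most `k`. Extend a partial witness arbitrarily to a total witness `f` and fix, for every
chain of `P`, one lift to a chain of `Q`. The lifts together use a set `S` of at most `2 ^ k * k`
elements of `Q`, and every `g` agreeing with `f` on `S` is again a witness. A random function agrees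
with `f` on `S` with probability `k ^ (-|S|)`.
-/

theorem card_eqOn_mul_pow_card {α β : Type*} [Finite α] (S : Finset α) (f : α → β) :
    Nat.card {g : α → β // Set.EqOn f g S} * Nat.card β ^ S.card = Nat.card β ^ Nat.card α := by
  classical
  have eqOn_iff (g : α → β) :
      Set.EqOn f g S ↔ g ∘ Subtype.val = fun a : {a // a ∈ S} => f a := by
    simp [funext_iff, Set.EqOn, eq_comm]
  have card_eqOn : Nat.card {g : α → β // Set.EqOn f g S} = Nat.card ({a // a ∉ S} → β) :=
    Nat.card_congr <|
      (Equiv.subtypeEquivRight eqOn_iff).trans (Equiv.subtypePreimage (· ∈ S) _)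
  calc Nat.card {g : α → β // Set.EqOn f g S} * Nat.card β ^ S.card
    _ = Nat.card ({a // a ∉ S} → β) * Nat.card ({a // a ∈ S} → β) := by
      rw [card_eqOn, Nat.card_fun (α := {a // a ∈ S}), Nat.card_eq_fintype_card (α := S),
        Fintype.card_coe]
    _ = Nat.card (α → β) := by
      rw [Nat.card_congr (Equiv.piEquivPiSubtypeProd (· ∈ S) fun _ => β), Nat.card_prod, mul_comm]
    _ = Nat.card β ^ Nat.card α := Nat.card_fun

namespace IsPosetChain

variable {α : Type*} [PartialOrder α] {l : List α}

theorem sortedLT (hl : IsPosetChain l) : l.SortedLT :=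
  List.IsChain.sortedLT hl

theorem length_le_card [Fintype α] (hl : IsPosetChain l) : l.length ≤ Fintype.card α :=
  hl.sortedLT.nodup.length_le_card

theorem toFinset_injective [DecidableEq α] :
    Function.Injective fun l : {l : List α // IsPosetChain l} => l.1.toFinset :=
  fun l m h => Subtype.ext <| l.2.sortedLT.eq_of_mem_iff m.2.sortedLT fun _ => by
    simpa only [List.mem_toFinset] using Finset.ext_iff.1 h _

instance finite_subtype [Finite α] : Finite {l : List α // IsPosetChain l} := by
  classical exact Finite.of_injective _ toFinset_injective

theorem card_subtype_le [Fintype α] [Fintype {l : List α // IsPosetChain l}] :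
    Fintype.card {l : List α // IsPosetChain l} ≤ 2 ^ Fintype.card α := by
  classical
  rw [← Fintype.card_finset]
  exact Fintype.card_le_of_injective _ toFinset_injective

end IsPosetChain

section Witness

variable {P Q : Type*} [PartialOrder P] [PartialOrder Q]

theorem IsChainMinorWitness.isTotalChainMinorWitness_getD {f : Q → Option P}
    (hf : IsChainMinorWitness f) (p : P) :
    IsTotalChainMinorWitness fun q => (f q).getD p := by
  intro c hc
  obtain ⟨c', hc', map_c'⟩ := hf c hc
  refine ⟨c', hc', ?_⟩
  simpa [Function.comp_def] using congrArg (List.map (·.getD p)) map_c'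

theorem ChainMinor.exists_isTotalChainMinorWitness [Nonempty P] (h : ChainMinor P Q) :
    ∃ f : Q → P, IsTotalChainMinorWitness f :=
  let ⟨_, hf⟩ := h
  ⟨_, hf.isTotalChainMinorWitness_getD (Classical.arbitrary P)⟩

theorem IsTotalChainMinorWitness.exists_finset_forall_eqOn [Fintype P] {f : Q → P}
    (hf : IsTotalChainMinorWitness f) :
    ∃ S : Finset Q, S.card ≤ 2 ^ Fintype.card P * Fintype.card P ∧
      ∀ g : Q → P, Set.EqOn f g S → IsTotalChainMinorWitness g := by
  classical
  have := Fintype.ofFinite {c : List P // IsPosetChain c}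
  choose lift isPosetChain_lift map_lift using
    fun c : {c : List P // IsPosetChain c} => hf c.1 c.2
  refine ⟨Finset.univ.biUnion fun c => (lift c).toFinset, ?_, fun g hg c hc => ?_⟩
  · have card_lift_le (c) : (lift c).toFinset.card ≤ Fintype.card P := calc
      (lift c).toFinset.card ≤ (lift c).length := (lift c).toFinset_card_le
      _ = c.1.length := by rw [← map_lift c, List.length_map]
      _ ≤ Fintype.card P := c.2.length_le_card
    calc (Finset.univ.biUnion fun c => (lift c).toFinset).card
      _ ≤ Fintype.card {c : List P // IsPosetChain c} * Fintype.card P :=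
        Finset.card_biUnion_le_card_mul _ _ _ fun c _ => card_lift_le c
      _ ≤ 2 ^ Fintype.card P * Fintype.card P :=
        Nat.mul_le_mul_right _ IsPosetChain.card_subtype_le
  · have eq_on_lift : ∀ q ∈ lift ⟨c, hc⟩, g q = f q := fun q hq =>
      (hg (Finset.mem_biUnion.2 ⟨⟨c, hc⟩, Finset.mem_univ _, List.mem_toFinset.2 hq⟩)).symm
    exact ⟨lift ⟨c, hc⟩, isPosetChain_lift _, (List.map_congr_left eq_on_lift).trans (map_lift _)⟩

theorem ChainMinor.pow_card_le_card_mul_pow [Fintype P] [Nonempty P] [Fintype Q]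
    (h : ChainMinor P Q) :
    Fintype.card P ^ Fintype.card Q ≤
      Nat.card {g : Q → P // IsTotalChainMinorWitness g} *
        Fintype.card P ^ (2 ^ Fintype.card P * Fintype.card P) := by
  obtain ⟨f, hf⟩ := h.exists_isTotalChainMinorWitness
  obtain ⟨S, card_le, isTotalChainMinorWitness_of_eqOn⟩ := hf.exists_finset_forall_eqOn
  have card_eqOn_le : Nat.card {g : Q → P // Set.EqOn f g S} ≤
      Nat.card {g : Q → P // IsTotalChainMinorWitness g} :=
    Nat.card_mono (Set.toFinite _) isTotalChainMinorWitness_of_eqOn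
  calc Fintype.card P ^ Fintype.card Q
    _ = Nat.card {g : Q → P // Set.EqOn f g S} * Fintype.card P ^ S.card := by
      simpa only [Nat.card_eq_fintype_card] using (card_eqOn_mul_pow_card S f).symm
    _ ≤ _ := Nat.mul_le_mul card_eqOn_le (Nat.pow_le_pow_right Fintype.card_pos card_le)

end Witness

/-- If `P ⪯ Q` and `k = |P| ≥ 1`, then a uniformly random total function `g : Q → P`
is a witness for `P ⪯ Q` with probability at least `k ^ (-2 ^ k * k)`; equivalently,
the number of total witnesses is at least `k ^ |Q| * k ^ (-2 ^ k * k)`.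
(The probability is the number of witnesses divided by `k ^ |Q|`, the total number
of functions `Q → P`.) -/
theorem random_function_is_witness {P Q : Type*} [Fintype P] [PartialOrder P]
    [Fintype Q] [PartialOrder Q] (k : ℕ) (hk : k = Fintype.card P) (hk1 : 1 ≤ k)
    (h : ChainMinor P Q) :
    (Nat.card {g : Q → P // IsTotalChainMinorWitness g} : ℝ) / (k : ℝ) ^ Fintype.card Q
        ≥ (k : ℝ) ^ (-((2 ^ k * k : ℕ) : ℤ))
    ∧ (Nat.card {g : Q → P // IsTotalChainMinorWitness g} : ℝ)
        ≥ (k : ℝ) ^ Fintype.card Q * (k : ℝ) ^ (-((2 ^ k * k : ℕ) : ℤ)) := by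
  subst hk
  have : Nonempty P := Fintype.card_pos_iff.1 hk1
  have card_pos : (0 : ℝ) < Fintype.card P := by exact_mod_cast hk1
  have count : (Fintype.card P : ℝ) ^ Fintype.card Q *
      (Fintype.card P : ℝ) ^ (-((2 ^ Fintype.card P * Fintype.card P : ℕ) : ℤ)) ≤
        Nat.card {g : Q → P // IsTotalChainMinorWitness g} := by
    rw [zpow_neg, zpow_natCast, ← div_eq_mul_inv, div_le_iff₀ (pow_pos card_pos _)]
    exact_mod_cast h.pow_card_le_card_mul_pow
  exact ⟨(le_div_iff₀' (pow_pos card_pos _)).2 count, count⟩
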